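/- Let α, β, a, b be integers with α ≥ 1, β ≥ 1, a ≥ 0, b ≥ 0 and a·b < α·β. Then the topological index of the BB(ᾱ, β̄, a, b) code, with f = 1 + x + x^{-α} y^{b} and g = 1 + y + y^{-β} x^{a} in R, is Q = dim_{F₂} R ⧸ (f, g) = (α + 1)·(β + 1) − a·b. -/

import Mathlib

noncomputable section

/-- The Laurent polynomial ring `F₂[x^±, y^±]` as a group algebra. -/
abbrev LaurentR : Type := AddMonoidAlgebra (ZMod 2) (ℤ × ℤ)

/-- The monomial `x^i y^j`. -/
def mono (i j : ℤ) : LaurentR := AddMonoidAlgebra.single (i, j) 1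

/-- The BB polynomial `f = 1 + x + x^{-α} y^{b}`. -/
def fBB (α b : ℤ) : LaurentR := 1 + mono 1 0 + mono (-α) b

/-- The BB polynomial `g = 1 + y + y^{-β} x^{a}`. -/
def gBB (β a : ℤ) : LaurentR := 1 + mono 0 1 + mono a (-β)

/-- A family that is unitriangular with respect to a basis has the same coordinates as the basis at
indices of maximal weight. -/
theorem Module.Basis.repr_of_triangular {k V ι : Type*} [Field k] [AddCommGroup V] [Module k V]
    (b : Module.Basis ι k V) (w : ι → ℕ) (e : ι → V)
    (he : ∀ m, e m - b m ∈ Submodule.span k (b '' {m' | w m' < w m})) {m m' : ι}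
    (h : w m' ≤ w m) : b.repr (e m') m = b.repr (b m') m := by
  have h1 := b.mem_span_image.1 (he m')
  have h2 : b.repr (e m' - b m') m = 0 := by
    by_contra hne
    exact absurd (h1 (Finsupp.mem_support_iff.2 hne)) (not_lt.2 h)
  rwa [map_sub, Finsupp.sub_apply, sub_eq_zero] at h2

theorem Module.Basis.linearIndependent_of_triangular {k V ι : Type*} [Field k] [AddCommGroup V]
    [Module k V] (b : Module.Basis ι k V) (w : ι → ℕ) (e : ι → V)
    (he : ∀ m, e m - b m ∈ Submodule.span k (b '' {m' | w m' < w m})) :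
    LinearIndependent k e := by
  classical
  rw [linearIndependent_iff]
  intro l hl
  by_contra hne
  obtain ⟨m, hm, hmax⟩ := l.support.exists_max_image w (Finsupp.support_nonempty_iff.2 hne)
  have h1 : b.repr (Finsupp.linearCombination k e l) m = l m := by
    rw [Finsupp.linearCombination_apply, Finsupp.sum, map_sum, Finsupp.finsetSum_apply,
      Finset.sum_eq_single_of_mem m hm]
    · rw [map_smul, Finsupp.smul_apply, b.repr_of_triangular w e he le_rfl]
      simp
    · intro m' hm' hmm
      rw [map_smul, Finsupp.smul_apply, b.repr_of_triangular w e he (hmax m' hm')]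
      simp [hmm]
  rw [hl] at h1
  exact Finsupp.mem_support_iff.1 hm (by simpa using h1.symm)

theorem Module.Basis.span_range_of_triangular {k V ι : Type*} [Field k] [AddCommGroup V]
    [Module k V] (b : Module.Basis ι k V) (w : ι → ℕ) (e : ι → V)
    (he : ∀ m, e m - b m ∈ Submodule.span k (b '' {m' | w m' < w m})) :
    Submodule.span k (Set.range e) = ⊤ := by
  rw [eq_top_iff, ← b.span_eq, Submodule.span_le]
  suffices h : ∀ n m, w m = n → b m ∈ Submodule.span k (Set.range e) by
    rintro _ ⟨m, rfl⟩
    exact h _ m rfl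
  intro n
  induction n using Nat.strong_induction_on with
  | _ n ih =>
    rintro m rfl
    have h1 : Submodule.span k (b '' {m' | w m' < w m}) ≤ Submodule.span k (Set.range e) := by
      rw [Submodule.span_le]
      rintro _ ⟨m', hm', rfl⟩
      exact ih _ hm' m' rfl
    rw [← sub_sub_cancel (e m) (b m)]
    exact sub_mem (Submodule.subset_span ⟨m, rfl⟩) (h1 (he m))

/-- The quotient by the span of all but finitely many members of a basis. -/
theorem Module.Basis.finrank_quotient_span_image_compl {k V ι : Type*} [Field k] [AddCommGroup V]
    [Module k V] (e : Module.Basis ι k V) (B : Finset ι) :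
    Module.Finite k (V ⧸ Submodule.span k (e '' (B : Set ι)ᶜ)) ∧
      Module.finrank k (V ⧸ Submodule.span k (e '' (B : Set ι)ᶜ)) = B.card := by
  classical
  let π : V →ₗ[k] (B → k) := LinearMap.pi fun i => e.coord i
  have hker : LinearMap.ker π = Submodule.span k (e '' (B : Set ι)ᶜ) := by
    ext v
    rw [e.mem_span_image, LinearMap.mem_ker, funext_iff]
    constructor
    · intro h m hm hmB
      exact Finsupp.mem_support_iff.1 hm (by simpa [π] using h ⟨m, hmB⟩)
    · rintro h ⟨m, hm⟩
      by_contra hne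
      exact h (Finsupp.mem_support_iff.2 (by simpa [π] using hne)) hm
  have hsurj : Function.Surjective π := by
    intro c
    refine ⟨∑ i, c i • e i, ?_⟩
    ext j
    simp [π, Finsupp.single_apply]
  rw [← hker]
  let E := π.quotKerEquivOfSurjective hsurj
  exact ⟨Module.Finite.equiv E.symm, by simpa using E.finrank_eq⟩

/-- If `R` is the localization of `S` away from `t`, the dimension of `S ⧸ I` splits into the part
where `t` is invertible and the part where `t` is nilpotent. -/
theorem finrank_quotient_map_add {k S R : Type*} [Field k] [CommRing S] [CommRing R]
    [Algebra k S] [Algebra k R] (φ : S →ₐ[k] R) (hφ : Function.Injective φ) (t : S)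
    (ht : IsUnit (φ t)) (hloc : ∀ r, ∃ (m : ℕ) (s : S), φ t ^ m * r = φ s)
    (I : Ideal S) [Module.Finite k (S ⧸ I)] :
    ∃ n₀ : ℕ, ∀ n ≥ n₀, Module.finrank k (R ⧸ I.map φ) +
      Module.finrank k (S ⧸ (I ⊔ Ideal.span {t ^ n})) = Module.finrank k (S ⧸ I) := by
  let T : Module.End k (S ⧸ I) := LinearMap.mulLeft k (Ideal.Quotient.mk I t)
  have hT : ∀ n s, (T ^ n) (Ideal.Quotient.mk I s) = Ideal.Quotient.mk I (t ^ n * s) := by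
    intro n s
    simp [T, LinearMap.pow_mulLeft]
  obtain ⟨n₀, hn₀⟩ := Filter.eventually_atTop.1
    (T.eventually_iInf_range_pow_eq.and T.eventually_iSup_ker_pow_eq)
  refine ⟨n₀, fun n hn => ?_⟩
  obtain ⟨hrange, hker⟩ := hn₀ n hn
  have hdown : ∀ r ∈ I.map φ, ∃ m : ℕ, ∃ s ∈ I, φ t ^ m * r = φ s := by
    intro r hr
    induction hr using Submodule.span_induction with
    | mem x hx =>
      obtain ⟨s, hs, rfl⟩ := hx
      exact ⟨0, s, hs, by simp⟩
    | zero => exact ⟨0, 0, I.zero_mem, by simp⟩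
    | add x y _ _ hx hy =>
      obtain ⟨m, s, hs, h⟩ := hx
      obtain ⟨m', s', hs', h'⟩ := hy
      refine ⟨m + m', t ^ m' * s + t ^ m * s', I.add_mem (I.mul_mem_left _ hs)
        (I.mul_mem_left _ hs'), ?_⟩
      simp only [map_add, map_mul, map_pow, ← h, ← h']
      ring
    | smul a x _ hx =>
      obtain ⟨m, s, hs, h⟩ := hx
      obtain ⟨m', s', h'⟩ := hloc a
      refine ⟨m' + m, s' * s, I.mul_mem_left _ hs, ?_⟩
      simp only [map_mul, ← h, ← h', smul_eq_mul]
      ring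
  let ψ : (S ⧸ I) →ₐ[k] (R ⧸ I.map φ) := Ideal.quotientMapₐ _ φ Ideal.le_comap_map
  have hψ : ∀ s, ψ (Ideal.Quotient.mk I s) = Ideal.Quotient.mk _ (φ s) := fun s => rfl
  have hψker : LinearMap.ker ψ.toLinearMap = LinearMap.ker (T ^ n) := by
    ext a
    obtain ⟨s, rfl⟩ := Ideal.Quotient.mk_surjective a
    simp only [LinearMap.mem_ker, AlgHom.toLinearMap_apply, hψ, hT, Ideal.Quotient.eq_zero_iff_mem]
    constructor
    · intro h
      obtain ⟨m, s', hs', h'⟩ := hdown _ h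
      have h1 : t ^ m * s ∈ I := by
        have : t ^ m * s = s' := hφ (by simpa using h')
        rwa [this]
      have h2 : Ideal.Quotient.mk I s ∈ LinearMap.ker (T ^ n) := by
        rw [← hker]
        refine le_iSup (fun m => LinearMap.ker (T ^ m)) m ?_
        rwa [LinearMap.mem_ker, hT, Ideal.Quotient.eq_zero_iff_mem]
      rwa [LinearMap.mem_ker, hT, Ideal.Quotient.eq_zero_iff_mem] at h2
    · intro h
      have h1 := Ideal.mem_map_of_mem φ h
      rw [map_mul, map_pow] at h1
      exact (Ideal.unit_mul_mem_iff_mem _ (ht.pow n)).1 h1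
  have hψsurj : Function.Surjective ψ.toLinearMap := by
    intro q
    obtain ⟨r, rfl⟩ := Ideal.Quotient.mk_surjective q
    obtain ⟨m, s, h⟩ := hloc r
    have h1 : (T ^ n) (Ideal.Quotient.mk I s) ∈ LinearMap.range (T ^ (m + n)) := by
      have h2 : (T ^ n) (Ideal.Quotient.mk I s) ∈ ⨅ m, LinearMap.range (T ^ m) := by
        rw [hrange]
        exact LinearMap.mem_range_self _ _
      exact (Submodule.mem_iInf _).1 h2 _
    obtain ⟨a, ha⟩ := h1
    obtain ⟨s', rfl⟩ := Ideal.Quotient.mk_surjective a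
    refine ⟨Ideal.Quotient.mk I s', ?_⟩
    rw [hT, hT, Ideal.Quotient.eq] at ha
    rw [AlgHom.toLinearMap_apply, hψ, Ideal.Quotient.eq]
    have h3 := Ideal.mem_map_of_mem φ ha
    rw [map_sub, map_mul, map_mul, ← h, map_pow, map_pow] at h3
    rw [← Ideal.unit_mul_mem_iff_mem _ (ht.pow (m + n))]
    convert h3 using 1
    ring
  let ρ : (S ⧸ I) →ₐ[k] (S ⧸ (I ⊔ Ideal.span {t ^ n})) := Ideal.Quotient.factorₐ k le_sup_left
  have hρ : ∀ s, ρ (Ideal.Quotient.mk I s) = Ideal.Quotient.mk _ s := fun s => rfl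
  have hρsurj : Function.Surjective ρ.toLinearMap := Ideal.Quotient.factor_surjective le_sup_left
  have hρker : LinearMap.ker ρ.toLinearMap = LinearMap.range (T ^ n) := by
    ext a
    obtain ⟨s, rfl⟩ := Ideal.Quotient.mk_surjective a
    rw [LinearMap.mem_ker, AlgHom.toLinearMap_apply, hρ, Ideal.Quotient.eq_zero_iff_mem,
      Submodule.mem_sup]
    constructor
    · rintro ⟨i, hi, c, hc, rfl⟩
      obtain ⟨d, rfl⟩ := Ideal.mem_span_singleton'.1 hc
      refine ⟨Ideal.Quotient.mk I d, ?_⟩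
      rw [hT, Ideal.Quotient.eq]
      convert I.neg_mem hi using 1
      ring
    · rintro ⟨a, ha⟩
      obtain ⟨d, rfl⟩ := Ideal.Quotient.mk_surjective a
      rw [hT, Ideal.Quotient.eq] at ha
      exact ⟨s - t ^ n * d, by simpa using I.neg_mem ha, t ^ n * d,
        Ideal.mem_span_singleton.2 (Dvd.intro _ rfl), by ring⟩
  have e1 := ψ.toLinearMap.finrank_range_add_finrank_ker
  have e2 := ρ.toLinearMap.finrank_range_add_finrank_ker
  have e3 := (T ^ n).finrank_range_add_finrank_ker
  rw [LinearMap.range_eq_top.2 hψsurj, finrank_top, hψker] at e1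
  rw [LinearMap.range_eq_top.2 hρsurj, finrank_top, hρker] at e2
  omega

/-- The polynomial ring `F₂[x, y]` as a monoid algebra. -/
abbrev PolyS : Type := AddMonoidAlgebra (ZMod 2) (ℕ × ℕ)

/-- The monomial `x^i y^j` of `F₂[x, y]` with exponent `m = (i, j)`. -/
def polyMono (m : ℕ × ℕ) : PolyS := AddMonoidAlgebra.single m 1

theorem polyMono_add (m n : ℕ × ℕ) : polyMono (m + n) = polyMono m * polyMono n := by
  simp [polyMono, AddMonoidAlgebra.single_mul_single]

theorem mul_mem_of_forall_polyMono_mul_mem {L : Submodule (ZMod 2) PolyS} {x : PolyS}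
    (h : ∀ m, polyMono m * x ∈ L) (r : PolyS) : r * x ∈ L := by
  induction r using AddMonoidAlgebra.induction_linear with
  | zero => simp
  | add f g hf hg => rw [add_mul]; exact L.add_mem hf hg
  | single m c =>
    have h1 : (AddMonoidAlgebra.single m c : PolyS) = c • polyMono m := by simp [polyMono]
    rw [h1, smul_mul_assoc]
    exact L.smul_mem c (h m)

/-- Let `F` and `G` be trinomials whose leading monomials for the weight `w` are `x^p` and `y^q`,
where weight `0` means that a monomial is discarded. Then the monomials `x^i y^j` with `i < p` and
`j < q` form a basis of the quotient by `F`, `G` and the discarded monomials. -/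
theorem finrank_quotient_of_leading (p q : ℕ) (s₁ s₂ r₁ r₂ : ℕ × ℕ) (w : ℕ × ℕ → ℕ) (F G : PolyS)
    (hF : F = polyMono (p, 0) + polyMono s₁ + polyMono s₂)
    (hG : G = polyMono (0, q) + polyMono r₁ + polyMono r₂)
    (hw : ∀ m n, w m = 0 → w (m + n) = 0)
    (hs₁ : ∀ m, w (m + s₁) ≤ w (m + (p, 0)) - 1) (hs₂ : ∀ m, w (m + s₂) ≤ w (m + (p, 0)) - 1)
    (hr₁ : ∀ m, w (m + r₁) ≤ w (m + (0, q)) - 1) (hr₂ : ∀ m, w (m + r₂) ≤ w (m + (0, q)) - 1)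
    (hbox : ∀ i < p, ∀ j < q, w (i, j) ≠ 0) :
    Module.Finite (ZMod 2) (PolyS ⧸ Ideal.span ({F, G} ∪ polyMono '' {m | w m = 0})) ∧
      Module.finrank (ZMod 2) (PolyS ⧸ Ideal.span ({F, G} ∪ polyMono '' {m | w m = 0})) =
        p * q := by
  classical
  let e : ℕ × ℕ → PolyS := fun m =>
    if w m = 0 then polyMono m
    else if p ≤ m.1 then polyMono (m.1 - p, m.2) * F
    else if q ≤ m.2 then polyMono (m.1, m.2 - q) * G
    else polyMono m
  have hp : ∀ m : ℕ × ℕ, p ≤ m.1 → ∃ n : ℕ × ℕ, m = n + (p, 0) := fun m h =>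
    ⟨(m.1 - p, m.2), by ext <;> simp [h]⟩
  have hq : ∀ m : ℕ × ℕ, q ≤ m.2 → ∃ n : ℕ × ℕ, m = n + (0, q) := fun m h =>
    ⟨(m.1, m.2 - q), by ext <;> simp [h]⟩
  have ez : ∀ m, w m = 0 → e m = polyMono m := fun m h => by simp [e, h]
  have eF : ∀ n, w (n + (p, 0)) ≠ 0 → e (n + (p, 0)) = polyMono n * F := fun n h => by
    simp [e, h]
  have eG : ∀ n : ℕ × ℕ, n.1 < p → w (n + (0, q)) ≠ 0 → e (n + (0, q)) = polyMono n * G :=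
    fun n h1 h => by simp [e, h, h1]
  have eB : ∀ m : ℕ × ℕ, m.1 < p → m.2 < q → e m = polyMono m :=
    fun m h1 h2 => by simp [e, not_le.2 h1, not_le.2 h2]
  have mulF : ∀ n, polyMono n * F =
      polyMono (n + (p, 0)) + polyMono (n + s₁) + polyMono (n + s₂) := fun n => by
    simp only [hF, polyMono_add]; ring
  have mulG : ∀ n, polyMono n * G =
      polyMono (n + (0, q)) + polyMono (n + r₁) + polyMono (n + r₂) := fun n => by
    simp only [hG, polyMono_add]; ring
  let b : Module.Basis (ℕ × ℕ) (ZMod 2) PolyS := AddMonoidAlgebra.basis (ℕ × ℕ) (ZMod 2)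
  have hb : ∀ m, b m = polyMono m := fun m => rfl
  have he : ∀ m, e m - b m ∈ Submodule.span (ZMod 2) (b '' {m' | w m' < w m}) := by
    intro m
    have key : ∀ m', w m ≠ 0 → w m' ≤ w m - 1 →
        polyMono m' ∈ Submodule.span (ZMod 2) (b '' {m' | w m' < w m}) := fun m' h0 h =>
      Submodule.subset_span ⟨m', by simp only [Set.mem_ofPred_eq]; omega, rfl⟩
    by_cases h0 : w m = 0
    · simp [ez m h0, hb]
    by_cases h1 : p ≤ m.1
    · obtain ⟨n, rfl⟩ := hp m h1
      rw [eF n h0, hb, mulF, add_assoc, add_sub_cancel_left]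
      exact add_mem (key _ h0 (hs₁ n)) (key _ h0 (hs₂ n))
    by_cases h2 : q ≤ m.2
    · obtain ⟨n, rfl⟩ := hq m h2
      rw [eG n (by simpa using h1) h0, hb, mulG, add_assoc, add_sub_cancel_left]
      exact add_mem (key _ h0 (hr₁ n)) (key _ h0 (hr₂ n))
    · simp [eB m (not_le.1 h1) (not_le.1 h2), hb]
  let B : Finset (ℕ × ℕ) := Finset.range p ×ˢ Finset.range q
  have hB : ∀ m, m ∈ B ↔ m.1 < p ∧ m.2 < q := fun m => by simp [B]
  set L := Submodule.span (ZMod 2) (e '' (B : Set (ℕ × ℕ))ᶜ) with hL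
  have memL : ∀ m, m ∉ B → e m ∈ L := fun m hm => Submodule.subset_span ⟨m, hm, rfl⟩
  have zL : ∀ m, w m = 0 → polyMono m ∈ L := fun m hm => by
    rw [← ez m hm]
    exact memL m fun h => hbox _ ((hB m).1 h).1 _ ((hB m).1 h).2 hm
  have FL : ∀ n, polyMono n * F ∈ L := by
    intro n
    by_cases h : w (n + (p, 0)) = 0
    · rw [mulF]
      have h1 := hs₁ n
      have h2 := hs₂ n
      exact add_mem (add_mem (zL _ h) (zL _ (by omega))) (zL _ (by omega))
    · rw [← eF n h]
      exact memL _ fun h' => by simpa using ((hB _).1 h').1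
  have hGL : ∀ k n, w n = k → polyMono n * G ∈ L := by
    intro k
    induction k using Nat.strong_induction_on with
    | _ k ih =>
      rintro n rfl
      by_cases h0 : w n = 0
      · rw [mulG]
        exact add_mem (add_mem (zL _ (hw _ _ h0)) (zL _ (hw _ _ h0))) (zL _ (hw _ _ h0))
      by_cases h1 : p ≤ n.1
      · obtain ⟨n, rfl⟩ := hp n h1
        have h2 := hs₁ n
        have h3 := hs₂ n
        have h4 : polyMono (n + (p, 0)) * G =
            G * polyMono n * F - polyMono (n + s₁) * G - polyMono (n + s₂) * G := by
          simp only [hF, polyMono_add]; ring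
        rw [h4]
        refine sub_mem (sub_mem ?_ (ih _ (by omega) _ rfl)) (ih _ (by omega) _ rfl)
        rw [mul_assoc]
        refine mul_mem_of_forall_polyMono_mul_mem (fun m => ?_) G
        rw [← mul_assoc, ← polyMono_add]
        exact FL _
      by_cases h : w (n + (0, q)) = 0
      · rw [mulG]
        have h1 := hr₁ n
        have h2 := hr₂ n
        exact add_mem (add_mem (zL _ h) (zL _ (by omega))) (zL _ (by omega))
      · rw [← eG n (not_le.1 h1) h]
        exact memL _ fun h' => by simpa using ((hB _).1 h').2
  have hLJ : L = (Ideal.span ({F, G} ∪ polyMono '' {m | w m = 0})).restrictScalars (ZMod 2) := by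
    apply le_antisymm
    · rw [hL, Submodule.span_le]
      rintro _ ⟨m, hm, rfl⟩
      by_cases h0 : w m = 0
      · rw [ez m h0]
        exact Ideal.subset_span (Or.inr ⟨m, h0, rfl⟩)
      by_cases h1 : p ≤ m.1
      · obtain ⟨n, rfl⟩ := hp m h1
        rw [eF n h0]
        exact Ideal.mul_mem_left _ _ (Ideal.subset_span (by simp))
      by_cases h2 : q ≤ m.2
      · obtain ⟨n, rfl⟩ := hq m h2
        rw [eG n (by simpa using h1) h0]
        exact Ideal.mul_mem_left _ _ (Ideal.subset_span (by simp))
      · exact absurd ((hB m).2 ⟨not_le.1 h1, not_le.1 h2⟩) hm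
    · intro x hx
      rw [Submodule.restrictScalars_mem] at hx
      induction hx using Submodule.closure_induction with
      | zero => exact L.zero_mem
      | add x y _ _ hx hy => exact L.add_mem hx hy
      | smul_mem r x hx =>
        refine mul_mem_of_forall_polyMono_mul_mem (fun m => ?_) r
        rcases hx with (rfl | rfl) | ⟨n, hn, rfl⟩
        · exact FL m
        · exact hGL _ m rfl
        · rw [← polyMono_add, add_comm]
          exact zL _ (hw _ _ hn)
  let E : Module.Basis (ℕ × ℕ) (ZMod 2) PolyS := Module.Basis.mk
    (b.linearIndependent_of_triangular w e he) (b.span_range_of_triangular w e he).ge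
  have hE : ⇑E = e := Module.Basis.coe_mk _ _
  have h := E.finrank_quotient_span_image_compl B
  rw [hE, ← hL, hLJ] at h
  let Q := Submodule.Quotient.restrictScalarsEquiv (ZMod 2)
    (Ideal.span ({F, G} ∪ polyMono '' {m | w m = 0}))
  have := h.1
  exact ⟨Module.Finite.equiv Q, by rw [← Q.finrank_eq, h.2]; simp [B]⟩

theorem pow_mem_sup_span_of_sub_mem {S : Type*} [CommRing S] {I : Ideal S} {x y d : S} {a : ℕ}
    (h : x ^ a - y * d ∈ I) (n : ℕ) : x ^ ((a + 1) * n) ∈ I ⊔ Ideal.span {(x * y) ^ n} := by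
  have h1 : x ^ ((a + 1) * n) = x ^ n * ((x ^ a) ^ n - (y * d) ^ n) + d ^ n * (x * y) ^ n := by
    rw [← pow_mul, add_mul, pow_add]
    ring
  rw [h1]
  exact add_mem
    (Ideal.mul_mem_left _ _ (Ideal.mem_sup_left (I.mem_of_dvd (sub_dvd_pow_sub_pow _ _ _) h)))
    (Ideal.mul_mem_left _ _ (Ideal.mem_sup_right (Ideal.mem_span_singleton_self _)))

theorem finrank_quotient_le_of_le {k S : Type*} [Field k] [CommRing S] [Algebra k S]
    {I J : Ideal S} [Module.Finite k (S ⧸ I)] (h : I ≤ J) :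
    Module.finrank k (S ⧸ J) ≤ Module.finrank k (S ⧸ I) :=
  LinearMap.finrank_le_finrank_of_surjective (f := (Ideal.Quotient.factorₐ k h).toLinearMap)
    (Ideal.Quotient.factor_surjective h)

theorem polyMono_eq (i j : ℕ) : polyMono (i, j) = polyMono (1, 0) ^ i * polyMono (0, 1) ^ j := by
  simp [polyMono, AddMonoidAlgebra.single_pow, AddMonoidAlgebra.single_mul_single]

/-- The inclusion `F₂[x, y] → F₂[x^±, y^±]`. -/
def polyToLaurent : PolyS →ₐ[ZMod 2] LaurentR :=
  AddMonoidAlgebra.mapDomainAlgHom (ZMod 2) (ZMod 2)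
    ((Nat.castAddMonoidHom ℤ).prodMap (Nat.castAddMonoidHom ℤ))

theorem polyToLaurent_single (i j : ℕ) (c : ZMod 2) :
    polyToLaurent (AddMonoidAlgebra.single (i, j) c) =
      AddMonoidAlgebra.single ((i : ℤ), (j : ℤ)) c := by
  simp [polyToLaurent]

theorem polyToLaurent_polyMono (i j : ℕ) : polyToLaurent (polyMono (i, j)) = mono i j :=
  polyToLaurent_single i j 1

theorem polyToLaurent_injective : Function.Injective polyToLaurent :=
  AddMonoidAlgebra.mapDomain_injective
    (Function.Injective.prodMap Nat.cast_injective Nat.cast_injective)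

theorem mono_mul_mono (i j i' j' : ℤ) : mono i j * mono i' j' = mono (i + i') (j + j') := by
  simp [mono, AddMonoidAlgebra.single_mul_single]

theorem mono_zero_zero : mono 0 0 = 1 := rfl

theorem isUnit_mono (i j : ℤ) : IsUnit (mono i j) :=
  IsUnit.of_mul_eq_one (mono (-i) (-j)) (by simp [mono_mul_mono, mono_zero_zero])

theorem mono_pow (i j : ℤ) (n : ℕ) : mono i j ^ n = mono (n * i) (n * j) := by
  simp [mono, AddMonoidAlgebra.single_pow]

theorem exists_pow_mul_eq_polyToLaurent (r : LaurentR) :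
    ∃ (m : ℕ) (s : PolyS), polyToLaurent (polyMono (1, 1)) ^ m * r = polyToLaurent s := by
  induction r using AddMonoidAlgebra.induction_linear with
  | zero => exact ⟨0, 0, by simp⟩
  | add f g hf hg =>
    obtain ⟨m, s, h⟩ := hf
    obtain ⟨m', s', h'⟩ := hg
    refine ⟨m + m', polyMono (1, 1) ^ m' * s + polyMono (1, 1) ^ m * s', ?_⟩
    simp only [map_add, map_mul, map_pow, ← h, ← h']
    ring
  | single z c =>
    obtain ⟨i, j⟩ := z
    refine ⟨i.natAbs + j.natAbs, AddMonoidAlgebra.single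
      ((i + i.natAbs + j.natAbs).toNat, (j + i.natAbs + j.natAbs).toNat) c, ?_⟩
    rw [polyToLaurent_polyMono, mono_pow, polyToLaurent_single, mono,
      AddMonoidAlgebra.single_mul_single, one_mul]
    congr 1
    have hi := neg_abs_le i
    have hj := neg_abs_le j
    have hi' := abs_nonneg i
    have hj' := abs_nonneg j
    ext <;> simp <;> omega

theorem bb_index_nat (α β a b : ℕ) (hα : 1 ≤ α) (hβ : 1 ≤ β) (hab : a * b < α * β) :
    Module.finrank (ZMod 2) (LaurentR ⧸ Ideal.span ({fBB α b, gBB β a} : Set LaurentR)) + a * b =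
      (α + 1) * (β + 1) := by
  let F : PolyS := polyMono (α + 1, 0) + polyMono (α, 0) + polyMono (0, b)
  let G : PolyS := polyMono (0, β + 1) + polyMono (0, β) + polyMono (a, 0)
  have hF : polyToLaurent F = mono α 0 * fBB α b := by
    simp only [F, fBB, map_add, polyToLaurent_polyMono, mul_add, mono_mul_mono, mul_one]
    push_cast
    simp only [zero_add, add_neg_cancel]
    abel
  have hG : polyToLaurent G = mono 0 β * gBB β a := by
    simp only [G, gBB, map_add, polyToLaurent_polyMono, mul_add, mono_mul_mono, mul_one]
    push_cast
    simp only [zero_add, add_neg_cancel]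
    abel
  have hmap : (Ideal.span {F, G}).map polyToLaurent = Ideal.span {fBB α b, gBB β a} := by
    rw [Ideal.map_span, Set.image_pair, hF, hG, Ideal.span_insert, Ideal.span_insert,
      Ideal.span_singleton_mul_left_unit (isUnit_mono _ _),
      Ideal.span_singleton_mul_left_unit (isUnit_mono _ _)]
  let w : ℕ × ℕ → ℕ := fun m => (b + β) * m.1 + (a + α) * m.2
  have w_add : ∀ m n, w (m + n) = w m + w n := fun m n => by
    simp only [w, Prod.fst_add, Prod.snd_add]; ring
  have w_mono : ∀ {m n : ℕ × ℕ}, m ≤ n → w m ≤ w n := fun h => by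
    simp only [w]
    exact Nat.add_le_add (Nat.mul_le_mul_left _ h.1) (Nat.mul_le_mul_left _ h.2)
  have w_a : w (a, 0) < w (0, β) := by simp only [w]; nlinarith
  have w_b : w (0, b) < w (α, 0) := by simp only [w]; nlinarith
  have w_α : w (α, 0) < w (α + 1, 0) := by simp only [w]; nlinarith
  have w_β : w (0, β) < w (0, β + 1) := by simp only [w]; nlinarith
  -- The affine quotient, by leading monomials `x ^ (α + 1)` and `y ^ (β + 1)`.
  have affine : Module.Finite (ZMod 2) (PolyS ⧸ Ideal.span {F, G}) ∧
      Module.finrank (ZMod 2) (PolyS ⧸ Ideal.span {F, G}) = (α + 1) * (β + 1) := by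
    have h := finrank_quotient_of_leading (α + 1) (β + 1) (α, 0) (0, b) (0, β) (a, 0)
      (fun m => w m + 1) F G rfl rfl (by simp) (fun m => by simp only [w_add]; omega)
      (fun m => by simp only [w_add]; omega) (fun m => by simp only [w_add]; omega)
      (fun m => by simp only [w_add]; omega) (by simp)
    have h0 : {m : ℕ × ℕ | w m + 1 = 0} = ∅ :=
      Set.eq_empty_of_forall_notMem fun m hm => Nat.succ_ne_zero _ hm
    rwa [h0, Set.image_empty, Set.union_empty] at h
  -- The part at the origin, by lowest monomials `y ^ b` and `x ^ a`.
  let J : ℕ → Ideal PolyS := fun N =>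
    Ideal.span ({G, F} ∪ polyMono '' {m | N - w m = 0})
  have origin : ∀ N, w (a, b) < N → Module.Finite (ZMod 2) (PolyS ⧸ J N) ∧
      Module.finrank (ZMod 2) (PolyS ⧸ J N) = a * b := by
    intro N hN
    refine finrank_quotient_of_leading a b (0, β + 1) (0, β) (α + 1, 0) (α, 0)
      (fun m => N - w m) G F (by simp only [G]; abel) (by simp only [F]; abel)
      (fun m n h => ?_) (fun m => ?_) (fun m => ?_) (fun m => ?_) (fun m => ?_)
      (fun i hi j hj => ?_)
    · simp only [w_add]; omega
    · simp only [w_add]; omega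
    · simp only [w_add]; omega
    · simp only [w_add]; omega
    · simp only [w_add]; omega
    · have : w (i, j) ≤ w (a, b) := w_mono ⟨hi.le, hj.le⟩
      omega
  have := affine.1
  obtain ⟨n₀, hn₀⟩ := finrank_quotient_map_add polyToLaurent polyToLaurent_injective
    (polyMono (1, 1)) (by rw [polyToLaurent_polyMono]; exact isUnit_mono _ _)
    exists_pow_mul_eq_polyToLaurent (Ideal.span {F, G})
  let n := n₀ + w (a, b) + 1
  have hn := hn₀ n (by omega)
  rw [hmap, affine.2] at hn
  let K : Ideal PolyS := Ideal.span {F, G} ⊔ Ideal.span {polyMono (1, 1) ^ n}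
  have hxy : polyMono (1, 1) = polyMono (1, 0) * polyMono (0, 1) := by simp [polyMono_eq 1 1]
  have hKJ : K ≤ J n := by
    refine sup_le (Ideal.span_mono (by rw [Set.pair_comm]; exact Set.subset_union_left)) ?_
    rw [Ideal.span_singleton_le_iff_mem, hxy, mul_pow, ← polyMono_eq]
    refine Ideal.subset_span (Or.inr ⟨_, ?_, rfl⟩)
    simp only [Set.mem_ofPred_eq, w]
    apply Nat.sub_eq_zero_of_le
    nlinarith
  have hx : polyMono (1, 0) ^ ((a + 1) * n) ∈ K := by
    have h1 : polyMono (1, 0) ^ a -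
        polyMono (0, 1) * (-(polyMono (0, 1) ^ (β - 1) * (1 + polyMono (0, 1)))) = G := by
      obtain ⟨c, rfl⟩ := Nat.exists_eq_add_of_le hβ
      simp only [G, polyMono_eq _ (1 + c), polyMono_eq _ (1 + c + 1), polyMono_eq a 0,
        Nat.add_sub_cancel_left]
      ring
    have h2 := pow_mem_sup_span_of_sub_mem (I := Ideal.span {F, G})
      (by rw [h1]; exact Ideal.subset_span (by simp)) n
    rwa [← hxy] at h2
  have hy : polyMono (0, 1) ^ ((b + 1) * n) ∈ K := by
    have h1 : polyMono (0, 1) ^ b -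
        polyMono (1, 0) * (-(polyMono (1, 0) ^ (α - 1) * (1 + polyMono (1, 0)))) = F := by
      obtain ⟨c, rfl⟩ := Nat.exists_eq_add_of_le hα
      simp only [F, polyMono_eq (1 + c), polyMono_eq (1 + c + 1), polyMono_eq 0 b,
        Nat.add_sub_cancel_left]
      ring
    have h2 := pow_mem_sup_span_of_sub_mem (I := Ideal.span {F, G})
      (by rw [h1]; exact Ideal.subset_span (by simp)) n
    rwa [mul_comm (polyMono (0, 1)), ← hxy] at h2
  let N := w ((a + 1) * n, (b + 1) * n) + n
  have hJK : J N ≤ K := by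
    refine Ideal.span_le.2 (Set.union_subset ?_ ?_)
    · rw [Set.pair_comm]
      exact Ideal.subset_span.trans (SetLike.coe_subset_coe.2 le_sup_left)
    · rintro _ ⟨⟨i, j⟩, hm, rfl⟩
      rw [polyMono_eq]
      by_cases hi : (a + 1) * n ≤ i
      · exact Ideal.mul_mem_right _ _ (K.mem_of_dvd (pow_dvd_pow _ hi) hx)
      by_cases hj : (b + 1) * n ≤ j
      · exact Ideal.mul_mem_left _ _ (K.mem_of_dvd (pow_dvd_pow _ hj) hy)
      have h1 : w (i, j) ≤ w ((a + 1) * n, (b + 1) * n) :=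
        w_mono ⟨(not_le.1 hi).le, (not_le.1 hj).le⟩
      simp only [Set.mem_ofPred_eq] at hm
      omega
  have hN : w (a, b) < N := by omega
  have := (origin N hN).1
  have : Module.Finite (ZMod 2) (PolyS ⧸ K) :=
    Module.Finite.of_surjective (Ideal.Quotient.factorₐ (ZMod 2) hJK).toLinearMap
      (Ideal.Quotient.factor_surjective hJK)
  have h1 := finrank_quotient_le_of_le (k := ZMod 2) hJK
  have h2 := finrank_quotient_le_of_le (k := ZMod 2) hKJ
  rw [(origin N hN).2] at h1
  rw [(origin n (by omega)).2] at h2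
  rw [← hn, le_antisymm h2 h1]

/-- If `α, β ≥ 1`, `a, b ≥ 0` and `a·b < α·β`, the topological index of BB(ᾱ, β̄, a, b) is `Q = (α+1)·(β+1) − a·b`. -/
theorem bb_index_regime_small (α β a b : ℤ) (hα : 1 ≤ α) (hβ : 1 ≤ β) (ha : 0 ≤ a) (hb : 0 ≤ b) (hab : a * b < α * β) :
    (Module.finrank (ZMod 2)
      (LaurentR ⧸ Ideal.span ({fBB α b, gBB β a} : Set LaurentR)) : ℤ) = (α + 1) * (β + 1) - a * b := by
  lift α to ℕ using by omega
  lift β to ℕ using by omega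
  lift a to ℕ using ha
  lift b to ℕ using hb
  have h := bb_index_nat α β a b (by omega) (by omega) (by exact_mod_cast hab)
  rw [eq_sub_iff_add_eq]
  exact_mod_cast h
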